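/- arXiv:1404.3127 — 2 statements merged into one kernel-verified Lean document; each statement's English description precedes it below -/
import Mathlib

section
/- Let p ∈ (0,1) and let M = (M_k)_{k≥0} satisfy M_k ≥ 1 for all k. For any real interval I = [a,b] with a < b and any ε > 0 and η > 0 there exists a smooth function u : ℝ → ℝ with all derivatives in L^p(ℝ) such that ‖u − χ_I‖_p < ε and ‖u^{(k)}‖_p ≤ η·M_k for every k ≥ 1. -/
open Real MeasureTheory Filter Set

noncomputable def pNorm (p : ℝ) (f : ℝ → ℝ) : ℝ := (∫ x : ℝ, |f x| ^ p) ^ (1 / p)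

noncomputable def supNorm (f : ℝ → ℝ) : ℝ := ⨆ x : ℝ, |f x|

def MemLp' (p : ℝ) (f : ℝ → ℝ) : Prop := MeasureTheory.Integrable (fun x : ℝ => |f x| ^ p)

def BddFun (f : ℝ → ℝ) : Prop := ∃ C : ℝ, ∀ x, |f x| ≤ C

noncomputable def MNorm (p : ℝ) (M : ℕ → ℝ) (f : ℝ → ℝ) : ℝ :=
  ⨆ k : ℕ, pNorm p (iteratedDeriv k f) / M k

/-- The class `S`: smooth functions whose derivatives are all bounded and in `L^p`,
with finite Carleman–Sobolev quasi-norm, and `limsup ‖f^(k)‖_∞ ^ (q^k) ≤ 1`. -/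
def MemS (p q : ℝ) (M : ℕ → ℝ) (f : ℝ → ℝ) : Prop :=
  ContDiff ℝ (⊤ : ℕ∞) f ∧
  (∀ k, BddFun (iteratedDeriv k f) ∧ MemLp' p (iteratedDeriv k f)) ∧
  BddAbove (Set.range fun k : ℕ => pNorm p (iteratedDeriv k f) / M k) ∧
  Filter.limsup (fun k : ℕ => supNorm (iteratedDeriv k f) ^ (q ^ k)) Filter.atTop ≤ 1

/-- `μ_M = ∏_{k=1}^∞ M_k ^ (p q^(k-1))`, as a `tprod`. -/
noncomputable def muProd (p q : ℝ) (M : ℕ → ℝ) : ℝ := ∏' k : ℕ, M (k + 1) ^ (p * q ^ k)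

/-- Convergence of the product `μ_M`. -/
def MuFinite (p q : ℝ) (M : ℕ → ℝ) : Prop := Multipliable fun k : ℕ => M (k + 1) ^ (p * q ^ k)

/-!
For `p < 1` the functional `∫ |f| ^ p` is subadditive, and it is small for functions that are
bounded by `1` and live on a short interval. Averaging the Heaviside step over backward windows of
widths `w 0, w 1, …` produces a smooth step `v` whose derivative is the difference quotient
`(v₁ x - v₁ (x - w 0)) / w 0` of the smooth step `v₁` with widths `w 1, w 2, …`. Iterating,

  `∫ |v⁽ᵏ⁺¹⁾| ^ p ≤ (∏ i < k, 2 w_i⁻ᵖ) · w_k⁻ᵖ · ∑ n ≥ k, w_n`.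

If each width is at most half of the previous one, the last two factors are at most `2 w_k¹⁻ᵖ`. As
`1 - p > 0`, the bound becomes arbitrarily small by choosing `w_k` small depending on the earlier
widths. The difference `v (x - a) - v (x - b)` is then the required approximation.
-/

section PowIntegral

variable {p : ℝ}

lemma memLp'_of_lintegral_lt_top {f : ℝ → ℝ} (hp : 0 ≤ p) (hf : AEMeasurable f)
    (h : ∫⁻ x, ‖f x‖ₑ ^ p < ⊤) : MemLp' p f := by
  refine ⟨(hf.norm.pow_const p).aestronglyMeasurable, ?_⟩
  simpa only [HasFiniteIntegral, Real.enorm_rpow_of_nonneg (abs_nonneg _) hp, enorm_abs] using h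

lemma pNorm_le_of_lintegral_le {f : ℝ → ℝ} {c : ℝ} (hp : 0 < p) (hc : 0 ≤ c)
    (h : ∫⁻ x, ‖f x‖ₑ ^ p ≤ ENNReal.ofReal (c ^ p)) : pNorm p f ≤ c := by
  have hint : ∫ x, |f x| ^ p ≤ c ^ p := by
    refine (le_abs_self _).trans (ENNReal.ofReal_le_ofReal_iff (by positivity) |>.1 ?_)
    rw [← Real.enorm_eq_ofReal_abs]
    refine (enorm_integral_le_lintegral_enorm _).trans ?_
    simpa only [Real.enorm_rpow_of_nonneg (abs_nonneg _) hp.le, enorm_abs] using h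
  calc pNorm p f ≤ (c ^ p) ^ (1 / p) := by unfold pNorm; gcongr
    _ = c := by rw [one_div, Real.rpow_rpow_inv hc hp.ne']

lemma lintegral_enorm_sub_rpow_le {α E : Type*} [MeasurableSpace α] {μ : Measure α}
    [SeminormedAddCommGroup E] {f g : α → E} (hp0 : 0 ≤ p) (hp1 : p ≤ 1)
    (hf : AEStronglyMeasurable f μ) :
    ∫⁻ x, ‖f x - g x‖ₑ ^ p ∂μ ≤ ∫⁻ x, ‖f x‖ₑ ^ p ∂μ + ∫⁻ x, ‖g x‖ₑ ^ p ∂μ := by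
  rw [← lintegral_add_left' (hf.enorm.pow_const p)]
  gcongr with x
  exact (ENNReal.rpow_le_rpow enorm_sub_le hp0).trans (ENNReal.rpow_add_le_add_rpow _ _ hp0 hp1)

lemma lintegral_enorm_inv_mul_rpow {α : Type*} [MeasurableSpace α] {μ : Measure α} {w : ℝ}
    (hp : 0 ≤ p) (hw : 0 < w) (f : α → ℝ) :
    ∫⁻ x, ‖w⁻¹ * f x‖ₑ ^ p ∂μ = ENNReal.ofReal (w ^ (-p)) * ∫⁻ x, ‖f x‖ₑ ^ p ∂μ := by
  have hw' : ‖w⁻¹‖ₑ ^ p = ENNReal.ofReal (w ^ (-p)) := by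
    rw [← Real.enorm_rpow_of_nonneg (by positivity) hp, Real.inv_rpow hw.le,
      ← Real.rpow_neg hw.le, Real.enorm_of_nonneg (by positivity)]
  simp_rw [enorm_mul, ENNReal.mul_rpow_of_nonneg _ _ hp, hw']
  exact lintegral_const_mul' _ _ ENNReal.ofReal_ne_top

lemma lintegral_enorm_rpow_le_measure {α E : Type*} [MeasurableSpace α] {μ : Measure α}
    [NormedAddCommGroup E] {f : α → E} {s : Set α} (hp : 0 < p) (hs : MeasurableSet s)
    (hf : ∀ x, ‖f x‖ ≤ 1) (hfs : ∀ x ∉ s, f x = 0) : ∫⁻ x, ‖f x‖ₑ ^ p ∂μ ≤ μ s := by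
  rw [← lintegral_indicator_one hs]
  gcongr with x
  by_cases hx : x ∈ s
  · rw [indicator_of_mem hx]
    refine ENNReal.rpow_le_one ?_ hp.le
    rw [← ofReal_norm]
    exact ENNReal.ofReal_le_one.2 (hf x)
  · simp [hfs x hx, hx, hp]

end PowIntegral

section TranslateDiff

/-- The difference of the translates of `f` by `a` and by `b`. It describes both the backward
differences produced by differentiating an average and the final approximation. -/
def translateDiff (a b : ℝ) (f : ℝ → ℝ) (x : ℝ) : ℝ := f (x - a) - f (x - b)

variable {a b p : ℝ} {f : ℝ → ℝ}

lemma contDiff_translateDiff {n : WithTop ℕ∞} (hf : ContDiff ℝ n f) :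
    ContDiff ℝ n (translateDiff a b f) := by
  unfold translateDiff
  fun_prop

lemma iteratedDeriv_translateDiff {k : ℕ} (hf : ContDiff ℝ k f) :
    iteratedDeriv k (translateDiff a b f) = translateDiff a b (iteratedDeriv k f) := by
  have hf' (c : ℝ) : ContDiff ℝ k fun x => f (x - c) := by fun_prop
  ext x
  unfold translateDiff
  rw [iteratedDeriv_fun_sub (hf' a).contDiffAt (hf' b).contDiffAt, iteratedDeriv_comp_sub_const,
    iteratedDeriv_comp_sub_const]

lemma lintegral_enorm_translateDiff_rpow_le (hp0 : 0 ≤ p) (hp1 : p ≤ 1) (hf : Measurable f) :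
    ∫⁻ x, ‖translateDiff a b f x‖ₑ ^ p ≤ 2 * ∫⁻ x, ‖f x‖ₑ ^ p := by
  have hfa : Measurable fun x => f (x - a) := by fun_prop
  refine (lintegral_enorm_sub_rpow_le hp0 hp1 hfa.aestronglyMeasurable).trans_eq ?_
  rw [lintegral_sub_right_eq_self (fun x => ‖f x‖ₑ ^ p) a,
    lintegral_sub_right_eq_self (fun x => ‖f x‖ₑ ^ p) b, two_mul]

lemma lintegral_enorm_iteratedDeriv_translateDiff_rpow_le {k : ℕ} (hp0 : 0 ≤ p) (hp1 : p ≤ 1)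
    (hf : ContDiff ℝ k f) : ∫⁻ x, ‖iteratedDeriv k (translateDiff a b f) x‖ₑ ^ p ≤
      2 * ∫⁻ x, ‖iteratedDeriv k f x‖ₑ ^ p := by
  rw [iteratedDeriv_translateDiff hf]
  exact lintegral_enorm_translateDiff_rpow_le hp0 hp1 (hf.continuous_iteratedDeriv' k).measurable

end TranslateDiff

/-- A step from `0` to `1` over `[a, b]`. The value at the jump of a discontinuous step is fixed by
asking for `0` strictly before `a` and for `1` from `b` on. -/
structure IsStep (a b : ℝ) (f : ℝ → ℝ) : Prop where
  monotone : Monotone f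
  eq_zero : ∀ x < a, f x = 0
  eq_one : ∀ x, b ≤ x → f x = 1

namespace IsStep

variable {a a' b b' c p : ℝ} {f g : ℝ → ℝ}

lemma nonneg (hf : IsStep a b f) (x : ℝ) : 0 ≤ f x := by
  rw [← hf.eq_zero (min x (a - 1)) (by grind)]
  exact hf.monotone (min_le_left _ _)

lemma le_one (hf : IsStep a b f) (x : ℝ) : f x ≤ 1 := by
  rw [← hf.eq_one (max x b) (le_max_right _ _)]
  exact hf.monotone (le_max_left _ _)

lemma widen (hf : IsStep a b f) (ha : a' ≤ a) (hb : b ≤ b') : IsStep a' b' f where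
  monotone := hf.monotone
  eq_zero x hx := hf.eq_zero x (hx.trans_le ha)
  eq_one x hx := hf.eq_one x (hb.trans hx)

lemma comp_sub_const (hf : IsStep a b f) (c : ℝ) :
    IsStep (a + c) (b + c) fun x => f (x - c) where
  monotone _ _ hxy := hf.monotone (sub_le_sub_right hxy c)
  eq_zero x hx := hf.eq_zero _ (by linarith)
  eq_one x hx := hf.eq_one _ (by linarith)

lemma of_tendsto {F : ℕ → ℝ → ℝ} (hF : ∀ n, IsStep a b (F n))
    (hlim : ∀ x, Tendsto (fun n => F n x) atTop (nhds (f x))) : IsStep a b f where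
  monotone x y hxy := le_of_tendsto_of_tendsto' (hlim x) (hlim y) fun n => (hF n).monotone hxy
  eq_zero x hx := tendsto_nhds_unique (hlim x) (by simp [(hF _).eq_zero x hx])
  eq_one x hx := tendsto_nhds_unique (hlim x) (by simp [(hF _).eq_one x hx])

lemma lintegral_enorm_sub_rpow_le (hp : 0 < p) (hf : IsStep a b f) (hg : IsStep a b g) :
    ∫⁻ x, ‖f x - g x‖ₑ ^ p ≤ ENNReal.ofReal (b - a) := by
  rw [← Real.volume_Ico]
  refine lintegral_enorm_rpow_le_measure hp measurableSet_Ico (fun x => ?_) (fun x hx => ?_)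
  · exact abs_sub_le_of_nonneg_of_le (hf.nonneg x) (hf.le_one x) (hg.nonneg x) (hg.le_one x)
  · obtain hxa | hxb : x < a ∨ b ≤ x := by simpa [or_iff_not_imp_left] using hx
    · rw [hf.eq_zero x hxa, hg.eq_zero x hxa, sub_zero]
    · rw [hf.eq_one x hxb, hg.eq_one x hxb, sub_self]

lemma lintegral_enorm_translateDiff_rpow_le (hp : 0 < p) (hf : IsStep 0 c f) (hab : a ≤ b) :
    ∫⁻ x, ‖translateDiff a b f x‖ₑ ^ p ≤ ENNReal.ofReal (c + b - a) :=
  ((hf.comp_sub_const a).widen (zero_add a).ge (by gcongr)).lintegral_enorm_sub_rpow_le hp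
    ((hf.comp_sub_const b).widen (by linarith) le_rfl)

end IsStep

section LeftAverage

/-- The average of `f` over the window `[x - w, x]`, written as an integral over `[0, 1]` so that it
is `f x` for `w = 0`. -/
noncomputable def leftAverage (w : ℝ) (f : ℝ → ℝ) (x : ℝ) : ℝ := ∫ t in (0 : ℝ)..1, f (x - w * t)

variable {a b w : ℝ} {f g : ℝ → ℝ}

lemma intervalIntegrable_comp_sub_mul (hw : 0 ≤ w) (hf : Monotone f) (x : ℝ) :
    IntervalIntegrable (fun t => f (x - w * t)) volume a b := by
  refine Antitone.intervalIntegrable fun s t hst => hf ?_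
  gcongr

lemma leftAverage_mono (hw : 0 ≤ w) (hf : Monotone f) (hg : Monotone g) (hfg : f ≤ g) :
    leftAverage w f ≤ leftAverage w g := fun x =>
  intervalIntegral.integral_mono_on zero_le_one (intervalIntegrable_comp_sub_mul hw hf x)
    (intervalIntegrable_comp_sub_mul hw hg x) fun _ _ => hfg _

lemma monotone_leftAverage (hw : 0 ≤ w) (hf : Monotone f) : Monotone (leftAverage w f) :=
  fun x y hxy => intervalIntegral.integral_mono_on zero_le_one
    (intervalIntegrable_comp_sub_mul hw hf x) (intervalIntegrable_comp_sub_mul hw hf y)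
    fun _ _ => hf (sub_le_sub_right hxy _)

lemma leftAverage_le_self (hw : 0 ≤ w) (hf : Monotone f) : leftAverage w f ≤ f := fun x =>
  calc leftAverage w f x ≤ ∫ _ in (0 : ℝ)..1, f x :=
        intervalIntegral.integral_mono_on zero_le_one (intervalIntegrable_comp_sub_mul hw hf x)
          (by simp) fun _ ht => hf (sub_le_self x (mul_nonneg hw ht.1))
    _ = f x := by simp

lemma leftAverage_eq_of_forall_mem_Icc {c x : ℝ} (hw : 0 ≤ w) (hf : ∀ y ∈ Icc (x - w) x, f y = c) :
    leftAverage w f x = c := by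
  have hcongr : EqOn (fun t => f (x - w * t)) (fun _ => c) (uIcc 0 1) := fun t ht => by
    rw [uIcc_of_le zero_le_one] at ht
    exact hf _ ⟨sub_le_sub_left (mul_le_of_le_one_right hw ht.2) x,
      sub_le_self x (mul_nonneg hw ht.1)⟩
  rw [leftAverage, intervalIntegral.integral_congr hcongr]
  simp

lemma IsStep.leftAverage (hf : IsStep a b f) (hw : 0 ≤ w) :
    IsStep a (b + w) (leftAverage w f) where
  monotone := monotone_leftAverage hw hf.monotone
  eq_zero x hx := leftAverage_eq_of_forall_mem_Icc hw fun y hy => hf.eq_zero y (hy.2.trans_lt hx)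
  eq_one x hx := leftAverage_eq_of_forall_mem_Icc hw fun y hy => hf.eq_one y (by linarith [hy.1])

lemma tendsto_leftAverage {F : ℕ → ℝ → ℝ} {C : ℝ} (hF : ∀ n, Measurable (F n))
    (hbound : ∀ n x, ‖F n x‖ ≤ C) (hlim : ∀ x, Tendsto (fun n => F n x) atTop (nhds (f x)))
    (x : ℝ) : Tendsto (fun n => leftAverage w (F n) x) atTop (nhds (leftAverage w f x)) :=
  intervalIntegral.tendsto_integral_filter_of_dominated_convergence (fun _ => C)
    (.of_forall fun n => ((hF n).comp (by fun_prop)).aestronglyMeasurable)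
    (.of_forall fun n => .of_forall fun _ _ => hbound n _)
    intervalIntegrable_const (.of_forall fun _ _ => hlim _)

lemma leftAverage_eq_translateDiff_primitive (hw : w ≠ 0)
    (hf : ∀ a b, IntervalIntegrable f volume a b) :
    leftAverage w f = fun x => w⁻¹ * translateDiff 0 w (fun y => ∫ t in (0 : ℝ)..y, f t) x := by
  ext x
  rw [leftAverage, intervalIntegral.integral_comp_sub_mul f hw x, translateDiff,
    intervalIntegral.integral_interval_sub_left (hf _ _) (hf _ _)]
  simp

lemma continuous_leftAverage (hw : w ≠ 0) (hf : ∀ a b, IntervalIntegrable f volume a b) :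
    Continuous (leftAverage w f) := by
  have hprim := intervalIntegral.continuous_primitive hf 0
  rw [leftAverage_eq_translateDiff_primitive hw hf]
  unfold translateDiff
  fun_prop

lemma hasDerivAt_leftAverage (hw : w ≠ 0) (hf : Continuous f) (x : ℝ) :
    HasDerivAt (leftAverage w f) (w⁻¹ * translateDiff 0 w f x) x := by
  have hprim (y : ℝ) := (hf.integral_hasStrictDerivAt 0 y).hasDerivAt
  rw [leftAverage_eq_translateDiff_primitive hw hf.intervalIntegrable]
  exact (((hprim (x - 0)).comp_sub_const x 0).sub ((hprim (x - w)).comp_sub_const x w)).const_mul _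

end LeftAverage

section SmoothStep

/-- The Heaviside step, with value `1` at the origin. -/
noncomputable def heavisideStep (x : ℝ) : ℝ := if 0 ≤ x then 1 else 0

/-- The Heaviside step averaged successively over backward windows of widths `w (d - 1), …, w 0`. -/
noncomputable def iteratedAverage : ℕ → (ℕ → ℝ) → ℝ → ℝ
  | 0, _ => heavisideStep
  | d + 1, w => leftAverage (w 0) (iteratedAverage d fun n => w (n + 1))

/-- The decreasing limit of the iterated averages of the Heaviside step with window widths `w`, that
is, the convolution of the step with infinitely many uniform densities. -/
noncomputable def smoothStep (w : ℕ → ℝ) (x : ℝ) : ℝ := ⨅ d, iteratedAverage d w x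

variable {w : ℕ → ℝ}

lemma isStep_heavisideStep : IsStep 0 0 heavisideStep where
  monotone x y hxy := by grind [heavisideStep]
  eq_zero x hx := by grind [heavisideStep]
  eq_one x hx := by grind [heavisideStep]

lemma isStep_iteratedAverage (hw : ∀ n, 0 ≤ w n) (d : ℕ) :
    IsStep 0 (∑ i ∈ Finset.range d, w i) (iteratedAverage d w) := by
  induction d generalizing w with
  | zero => simpa [iteratedAverage] using isStep_heavisideStep
  | succ d ih =>
    rw [Finset.sum_range_succ']
    exact (ih fun n => hw (n + 1)).leftAverage (hw 0)

lemma iteratedAverage_succ_le (hw : ∀ n, 0 ≤ w n) (d : ℕ) :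
    iteratedAverage (d + 1) w ≤ iteratedAverage d w := by
  induction d generalizing w with
  | zero => exact leftAverage_le_self (hw 0) isStep_heavisideStep.monotone
  | succ d ih =>
    have hw' (n : ℕ) : 0 ≤ w (n + 1) := hw (n + 1)
    exact leftAverage_mono (hw 0) (isStep_iteratedAverage hw' _).monotone
      (isStep_iteratedAverage hw' _).monotone (ih hw')

lemma tendsto_iteratedAverage (hw : ∀ n, 0 ≤ w n) (x : ℝ) :
    Tendsto (fun d => iteratedAverage d w x) atTop (nhds (smoothStep w x)) :=
  tendsto_atTop_ciInf (antitone_nat_of_succ_le fun d => iteratedAverage_succ_le hw d x)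
    ⟨0, forall_mem_range.2 fun d => (isStep_iteratedAverage hw d).nonneg x⟩

lemma isStep_smoothStep (hw : ∀ n, 0 ≤ w n) (hsum : Summable w) :
    IsStep 0 (∑' n, w n) (smoothStep w) :=
  .of_tendsto (fun d => (isStep_iteratedAverage hw d).widen le_rfl
    (hsum.sum_le_tsum _ fun n _ => hw n)) (tendsto_iteratedAverage hw)

lemma smoothStep_eq_leftAverage (hw : ∀ n, 0 ≤ w n) :
    smoothStep w = leftAverage (w 0) (smoothStep fun n => w (n + 1)) := by
  have hstep := isStep_iteratedAverage fun n => hw (n + 1)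
  ext x
  refine tendsto_nhds_unique ((tendsto_add_atTop_iff_nat 1).2 (tendsto_iteratedAverage hw x)) ?_
  refine tendsto_leftAverage (C := 1) (fun d => (hstep d).monotone.measurable) (fun d y => ?_)
    (tendsto_iteratedAverage fun n => hw (n + 1)) x
  rw [Real.norm_of_nonneg ((hstep d).nonneg y)]
  exact (hstep d).le_one y

lemma continuous_smoothStep (hw : ∀ n, 0 < w n) (hsum : Summable w) :
    Continuous (smoothStep w) := by
  rw [smoothStep_eq_leftAverage fun n => (hw n).le]
  have htail := isStep_smoothStep (fun n => (hw (n + 1)).le) ((summable_nat_add_iff 1).2 hsum)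
  exact continuous_leftAverage (hw 0).ne' fun _ _ => htail.monotone.intervalIntegrable

lemma hasDerivAt_smoothStep (hw : ∀ n, 0 < w n) (hsum : Summable w) (x : ℝ) :
    HasDerivAt (smoothStep w)
      ((w 0)⁻¹ * translateDiff 0 (w 0) (smoothStep fun n => w (n + 1)) x) x := by
  rw [smoothStep_eq_leftAverage fun n => (hw n).le]
  exact hasDerivAt_leftAverage (hw 0).ne'
    (continuous_smoothStep (fun n => hw (n + 1)) ((summable_nat_add_iff 1).2 hsum)) x

lemma deriv_smoothStep (hw : ∀ n, 0 < w n) (hsum : Summable w) :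
    deriv (smoothStep w) =
      fun x => (w 0)⁻¹ * translateDiff 0 (w 0) (smoothStep fun n => w (n + 1)) x :=
  funext fun x => (hasDerivAt_smoothStep hw hsum x).deriv

lemma contDiff_smoothStep (hw : ∀ n, 0 < w n) (hsum : Summable w) :
    ContDiff ℝ (⊤ : ℕ∞) (smoothStep w) := by
  refine contDiff_infty.2 fun n => ?_
  induction n generalizing w with
  | zero => exact contDiff_zero.2 (continuous_smoothStep hw hsum)
  | succ n ih =>
    push_cast
    refine contDiff_succ_iff_deriv.2
      ⟨fun x => (hasDerivAt_smoothStep hw hsum x).differentiableAt, by simp, ?_⟩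
    rw [deriv_smoothStep hw hsum]
    exact contDiff_const.mul (contDiff_translateDiff
      (ih (fun n => hw (n + 1)) ((summable_nat_add_iff 1).2 hsum)))

lemma iteratedDeriv_succ_smoothStep (hw : ∀ n, 0 < w n) (hsum : Summable w) (k : ℕ) :
    iteratedDeriv (k + 1) (smoothStep w) = fun x =>
      (w 0)⁻¹ * translateDiff 0 (w 0) (iteratedDeriv k (smoothStep fun n => w (n + 1))) x := by
  have htail := contDiff_smoothStep (fun n => hw (n + 1)) ((summable_nat_add_iff 1).2 hsum)
  ext x
  rw [iteratedDeriv_succ', deriv_smoothStep hw hsum, iteratedDeriv_const_mul_field,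
    iteratedDeriv_translateDiff (contDiff_infty.1 htail k)]

lemma lintegral_enorm_iteratedDeriv_smoothStep_rpow_le {p : ℝ} (hp0 : 0 < p) (hp1 : p ≤ 1)
    (hw : ∀ n, 0 < w n) (hsum : Summable w) (k : ℕ) :
    ∫⁻ x, ‖iteratedDeriv (k + 1) (smoothStep w) x‖ₑ ^ p ≤ ENNReal.ofReal
      ((∏ i ∈ Finset.range k, 2 * w i ^ (-p)) * (w k ^ (-p) * ∑' n, w (n + k))) := by
  induction k generalizing w with
  | zero =>
    have htail := isStep_smoothStep (fun n => (hw (n + 1)).le) ((summable_nat_add_iff 1).2 hsum)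
    rw [iteratedDeriv_succ_smoothStep hw hsum, lintegral_enorm_inv_mul_rpow hp0.le (hw 0),
      Finset.prod_range_zero, one_mul, ENNReal.ofReal_mul (rpow_nonneg (hw 0).le _)]
    gcongr
    refine (htail.lintegral_enorm_translateDiff_rpow_le hp0 (hw 0).le).trans_eq ?_
    congr 1
    simp [hsum.tsum_eq_zero_add, add_comm]
  | succ k ih =>
    have hw' (n : ℕ) : 0 < w (n + 1) := hw (n + 1)
    have hsum' : Summable fun n => w (n + 1) := (summable_nat_add_iff 1).2 hsum
    have hmeas := ((contDiff_infty.1 (contDiff_smoothStep hw' hsum')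
      (k + 1)).continuous_iteratedDeriv' (k + 1)).measurable
    rw [iteratedDeriv_succ_smoothStep hw hsum, lintegral_enorm_inv_mul_rpow hp0.le (hw 0)]
    calc _ ≤ ENNReal.ofReal (w 0 ^ (-p)) * (2 * ENNReal.ofReal _) := by
          gcongr
          exact (lintegral_enorm_translateDiff_rpow_le hp0.le hp1 hmeas).trans
            (by gcongr; exact ih hw' hsum')
      _ = _ := by
          rw [← ENNReal.ofReal_ofNat 2, ← ENNReal.ofReal_mul zero_le_two,
            ← ENNReal.ofReal_mul (rpow_nonneg (hw 0).le _), Finset.prod_range_succ']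
          simp only [add_assoc]
          ring_nf

end SmoothStep

section Widths

lemma exists_seq_of_forall_fin {α : Type*} {P : (n : ℕ) → (Fin n → α) → α → Prop}
    (h : ∀ n s, ∃ t, P n s t) : ∃ u : ℕ → α, ∀ n, P n (fun i => u i) (u n) := by
  choose F hF using h
  refine ⟨Nat.lt_wfRel.wf.fix fun n ih => F n fun i => ih i i.2, fun n => ?_⟩
  rw [WellFounded.fix_eq]
  exact hF n _

lemma le_mul_half_pow_of_le_half {w : ℕ → ℝ} (hw : ∀ n, w (n + 1) ≤ w n / 2) (n : ℕ) :
    w n ≤ w 0 * (1 / 2) ^ n :=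
  (le_geom (by norm_num) n fun k _ => by linarith [hw k]).trans_eq (mul_comm _ _)

lemma summable_of_le_half {w : ℕ → ℝ} (hw0 : ∀ n, 0 ≤ w n) (hw : ∀ n, w (n + 1) ≤ w n / 2) :
    Summable w :=
  .of_nonneg_of_le hw0 (le_mul_half_pow_of_le_half hw) (summable_geometric_two.mul_left _)

lemma tsum_le_two_mul_of_le_half {w : ℕ → ℝ} (hw0 : ∀ n, 0 ≤ w n)
    (hw : ∀ n, w (n + 1) ≤ w n / 2) : ∑' n, w n ≤ 2 * w 0 :=
  calc ∑' n, w n ≤ ∑' n, w 0 * (1 / 2) ^ n :=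
        (summable_of_le_half hw0 hw).tsum_le_tsum (le_mul_half_pow_of_le_half hw)
          (summable_geometric_two.mul_left _)
    _ = 2 * w 0 := by rw [tsum_mul_left, tsum_geometric_two, mul_comm]

lemma eventually_mul_rpow_le (C : ℝ) {s δ : ℝ} (hs : 0 < s) (hδ : 0 < δ) :
    ∀ᶠ t in nhdsWithin 0 (Ioi 0), C * t ^ s ≤ δ := by
  have hlim : Tendsto (fun t : ℝ => C * t ^ s) (nhds 0) (nhds (C * 0 ^ s)) :=
    (continuousAt_rpow_const 0 s (Or.inr hs.le)).const_mul C
  rw [zero_rpow hs.ne', mul_zero] at hlim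
  exact (hlim.mono_left nhdsWithin_le_nhds).eventually_le_const hδ

lemma exists_widths_le_half {p r : ℝ} (hp : p < 1) (hr : 0 < r) {δ : ℕ → ℝ} (hδ : ∀ k, 0 < δ k) :
    ∃ w : ℕ → ℝ, (∀ n, 0 < w n) ∧ (∀ n, w (n + 1) ≤ w n / 2) ∧ w 0 ≤ r ∧
      ∀ k, (∏ i ∈ Finset.range k, 2 * w i ^ (-p)) * 2 * w k ^ (1 - p) ≤ δ k := by
  have hnext (n : ℕ) (s : Fin n → Ioi (0 : ℝ)) : ∃ t : Ioi (0 : ℝ),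
      (∀ i, (t : ℝ) ≤ s i / 2) ∧ (t : ℝ) ≤ r ∧
        (∏ i, 2 * (s i : ℝ) ^ (-p)) * 2 * (t : ℝ) ^ (1 - p) ≤ δ n := by
    have hle {c : ℝ} (hc : 0 < c) : ∀ᶠ t in nhdsWithin 0 (Ioi 0), t ≤ c :=
      nhdsWithin_le_nhds (eventually_le_nhds hc)
    obtain ⟨t, ht, hts⟩ := (eventually_mem_nhdsWithin.and
      ((eventually_all.2 fun i => hle (half_pos (s i).2)).and ((hle hr).and
        (eventually_mul_rpow_le _ (sub_pos.2 hp) (hδ n))))).exists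
    exact ⟨⟨t, ht⟩, hts⟩
  obtain ⟨w, hw⟩ := exists_seq_of_forall_fin hnext
  refine ⟨fun n => w n, fun n => (w n).2, fun n => (hw (n + 1)).1 (Fin.last n), (hw 0).2.1,
    fun k => ?_⟩
  rw [Finset.prod_range]
  exact (hw k).2.2

lemma exists_widths {p r : ℝ} (hp : p < 1) (hr : 0 < r) {δ : ℕ → ℝ} (hδ : ∀ k, 0 < δ k) :
    ∃ w : ℕ → ℝ, (∀ n, 0 < w n) ∧ Summable w ∧ ∑' n, w n ≤ r ∧
      ∀ k, (∏ i ∈ Finset.range k, 2 * w i ^ (-p)) * (w k ^ (-p) * ∑' n, w (n + k)) ≤ δ k := by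
  obtain ⟨w, hpos, hhalf, hw0, hw⟩ := exists_widths_le_half hp (half_pos hr) hδ
  have htail (k : ℕ) : ∑' n, w (n + k) ≤ 2 * w k := by
    simpa using tsum_le_two_mul_of_le_half (w := fun n => w (n + k)) (fun n => (hpos _).le)
      fun n => by simpa only [add_right_comm] using hhalf (n + k)
  refine ⟨w, hpos, summable_of_le_half (fun n => (hpos n).le) hhalf, ?_, fun k => ?_⟩
  · linarith [show ∑' n, w n ≤ 2 * w 0 from htail 0]
  · have hprod : 0 ≤ ∏ i ∈ Finset.range k, 2 * w i ^ (-p) :=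
      Finset.prod_nonneg fun i _ => mul_nonneg zero_le_two (rpow_nonneg (hpos i).le _)
    calc _ ≤ (∏ i ∈ Finset.range k, 2 * w i ^ (-p)) * (w k ^ (-p) * (2 * w k)) := by
          have := hpos k
          gcongr
          exact htail k
      _ = (∏ i ∈ Finset.range k, 2 * w i ^ (-p)) * 2 * w k ^ (1 - p) := by
          rw [sub_eq_neg_add, rpow_add_one (hpos k).ne']
          ring
      _ ≤ δ k := hw k

end Widths

section Approximation

variable {a b p : ℝ}

lemma indicator_Icc_ae_eq_translateDiff (hab : a ≤ b) :
    indicator (Icc a b) (fun _ => 1) =ᵐ[volume] translateDiff a b heavisideStep := by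
  filter_upwards [volume.ae_ne b] with x hx
  simp only [indicator, mem_Icc]
  grind [translateDiff, heavisideStep]

lemma lintegral_enorm_translateDiff_sub_indicator_rpow_le {c : ℝ} {v : ℝ → ℝ} (hp0 : 0 < p)
    (hp1 : p ≤ 1) (hv : IsStep 0 c v) (hc : 0 ≤ c) (hab : a ≤ b) :
    ∫⁻ x, ‖translateDiff a b v x - indicator (Icc a b) (fun _ => 1) x‖ₑ ^ p ≤
      2 * ENNReal.ofReal c := by
  have hH : IsStep 0 c heavisideStep := isStep_heavisideStep.widen le_rfl hc
  calc _ = ∫⁻ x, ‖translateDiff a b (v - heavisideStep) x‖ₑ ^ p := by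
        refine lintegral_congr_ae ?_
        filter_upwards [indicator_Icc_ae_eq_translateDiff hab] with x hx
        rw [hx]
        simp only [translateDiff, Pi.sub_apply, sub_sub_sub_comm]
    _ ≤ 2 * ∫⁻ x, ‖v x - heavisideStep x‖ₑ ^ p := lintegral_enorm_translateDiff_rpow_le hp0.le hp1
        (hv.monotone.measurable.sub hH.monotone.measurable)
    _ ≤ 2 * ENNReal.ofReal c := by
        gcongr
        simpa using hv.lintegral_enorm_sub_rpow_le hp0 hH

lemma two_mul_ofReal_half (c : ℝ) : 2 * ENNReal.ofReal (c / 2) = ENNReal.ofReal c := by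
  rw [← ENNReal.ofReal_ofNat 2, ← ENNReal.ofReal_mul zero_le_two, mul_div_cancel₀ c two_ne_zero]

theorem exists_smooth_approx_indicator_general (hp0 : 0 < p) (hp1 : p < 1) {M : ℕ → ℝ}
    (hM : ∀ k, 0 < M k) (hab : a ≤ b) {ε : ℝ} (hε : 0 < ε) :
    ∃ u : ℝ → ℝ, ContDiff ℝ (⊤ : ℕ∞) u ∧ (∀ k, MemLp' p (iteratedDeriv k u)) ∧
      pNorm p (fun x => u x - indicator (Icc a b) (fun _ => 1) x) < ε ∧
      ∀ k, 1 ≤ k → pNorm p (iteratedDeriv k u) ≤ M k := by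
  obtain ⟨w, hw, hsum, hr, hδ⟩ := exists_widths hp1 (r := (ε / 2) ^ p / 2) (by positivity)
    (δ := fun k => M (k + 1) ^ p / 2) fun k => half_pos (rpow_pos_of_pos (hM _) p)
  have hstep := isStep_smoothStep (fun n => (hw n).le) hsum
  have hsmooth := contDiff_smoothStep hw hsum
  set u := translateDiff a b (smoothStep w)
  have hu_smooth : ContDiff ℝ (⊤ : ℕ∞) u := contDiff_translateDiff hsmooth
  have hderiv (k : ℕ) : ∫⁻ x, ‖iteratedDeriv (k + 1) u x‖ₑ ^ p ≤
      ENNReal.ofReal (M (k + 1) ^ p) := by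
    rw [← two_mul_ofReal_half]
    grw [← hδ k, ← lintegral_enorm_iteratedDeriv_smoothStep_rpow_le hp0 hp1.le hw hsum k]
    exact lintegral_enorm_iteratedDeriv_translateDiff_rpow_le hp0.le hp1.le
      (contDiff_infty.1 hsmooth _)
  have hmeas (k : ℕ) : AEMeasurable (iteratedDeriv k u) :=
    ((contDiff_infty.1 hu_smooth k).continuous_iteratedDeriv' k).aemeasurable
  refine ⟨u, hu_smooth, fun k => memLp'_of_lintegral_lt_top hp0.le (hmeas k) ?_, ?_,
    fun k hk => ?_⟩
  · rcases k with _ | k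
    · rw [iteratedDeriv_zero]
      exact (hstep.lintegral_enorm_translateDiff_rpow_le hp0 hab).trans_lt ENNReal.ofReal_lt_top
    · exact (hderiv k).trans_lt ENNReal.ofReal_lt_top
  · refine (pNorm_le_of_lintegral_le hp0 (half_pos hε).le ?_).trans_lt (half_lt_self hε)
    rw [← two_mul_ofReal_half]
    grw [← hr]
    exact lintegral_enorm_translateDiff_sub_indicator_rpow_le hp0 hp1.le hstep
      (tsum_nonneg fun n => (hw n).le) hab
  · obtain ⟨k, rfl⟩ := Nat.exists_eq_add_of_le' hk
    exact pNorm_le_of_lintegral_le hp0 (hM _).le (hderiv k)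

end Approximation

/-- Lemma: approximation of indicators of intervals. For any interval
`[a,b]`, `ε > 0` and `η > 0`, there is a smooth `u` with all derivatives in `L^p` such that
`‖u - χ_{[a,b]}‖_p < ε` and `‖u^(k)‖_p ≤ η M_k` for all `k ≥ 1`. -/
theorem exists_smooth_approx_indicator (p : ℝ) (hp : 0 < p) (hp1 : p < 1)
    (M : ℕ → ℝ) (hM : ∀ k, 1 ≤ M k) (a b : ℝ) (hab : a < b)
    (ε η : ℝ) (hε : 0 < ε) (hη : 0 < η) :
    ∃ u : ℝ → ℝ, ContDiff ℝ (⊤ : ℕ∞) u ∧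
      (∀ k, MemLp' p (iteratedDeriv k u)) ∧
      pNorm p (fun x => u x - Set.indicator (Set.Icc a b) (fun _ => (1 : ℝ)) x) < ε ∧
      ∀ k, 1 ≤ k → pNorm p (iteratedDeriv k u) ≤ η * M k :=
  exists_smooth_approx_indicator_general hp hp1
    (fun k => mul_pos hη (zero_lt_one.trans_le (hM k))) hab.le hε
end

section
/- Let p ∈ (0,1) and let M = (M_k)_{k≥0} satisfy M_k ≥ 1 for all k. Let f = ∑_{k=1}^m c_k χ_{I_k} be a step function, i.e. a finite linear combination of indicator functions of pairwise disjoint bounded intervals I_k with real coefficients c_k. Then there exists a sequence (f_i)_{i≥0} of smooth functions, each with all derivatives in L^p(ℝ) and ‖f_i‖_M < ∞, such that ‖f − f_i‖_p → 0 and sup_{n≥1} ‖f_i^{(n)}‖_p / M_n → 0 as i → ∞; consequently (f_i) is Cauchy with respect to ‖·‖_M and ‖f_i‖_M → ‖f‖_p / M_0. -/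
open Real MeasureTheory Filter Set

/-!
The unit step is smoothed by convolving it with the normalised indicator functions of intervals of
rapidly decreasing lengths `h 0, h 1, …`. Differentiating such a convolution `n + 1` times costs a
factor `2 * h j ^ (-p)` in `∫ |·| ^ p` for each `j < n`, while the last derivative is at most
`(h n)⁻¹` on an interval of length `2 * h n` and thus contributes only `2 * h n ^ (1 - p)`. As
`p < 1`, this tends to `0` with `h n`, so `h n` can be chosen after `h 0, …, h (n - 1)` to make all
derivatives as small in `L^p` as desired. Subadditivity of `∫ |·| ^ p` extends this to step
functions. The infinite convolutions are obtained all at once, as a fixed point of a monotone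
operator on sequences of monotone functions.
-/

open scoped ENNReal Topology

section LpPow

variable {α E : Type*} [MeasurableSpace α] {μ : Measure α} [NormedAddCommGroup E]
  {p : ℝ} {f g : α → E}

/-- The `p`-th power `∫ ‖f‖ ^ p` of the `L^p` quasi-norm, which is subadditive for `p ≤ 1`.
It takes values in `ℝ≥0∞`, so an upper bound on it includes membership in `L^p`. -/
noncomputable def lpPow (p : ℝ) (μ : Measure α) (f : α → E) : ℝ≥0∞ := ∫⁻ x, ‖f x‖ₑ ^ p ∂μ

lemma lpPow_congr_ae (h : f =ᵐ[μ] g) : lpPow p μ f = lpPow p μ g :=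
  lintegral_congr_ae (h.mono fun _ hx => by simp only [hx])

lemma lpPow_zero (hp : 0 < p) : lpPow p μ (0 : α → E) = 0 := by
  simp [lpPow, ENNReal.zero_rpow_of_pos hp]

lemma lpPow_neg : lpPow p μ (-f) = lpPow p μ f := by simp [lpPow]

lemma lpPow_add_le (hp : 0 ≤ p) (hp1 : p ≤ 1) (hf : AEStronglyMeasurable f μ) :
    lpPow p μ (f + g) ≤ lpPow p μ f + lpPow p μ g :=
  calc lpPow p μ (f + g) ≤ ∫⁻ x, (‖f x‖ₑ ^ p + ‖g x‖ₑ ^ p) ∂μ :=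
        lintegral_mono fun _ => (ENNReal.rpow_le_rpow (enorm_add_le _ _) hp).trans
          (ENNReal.rpow_add_le_add_rpow _ _ hp hp1)
    _ = lpPow p μ f + lpPow p μ g := lintegral_add_left' (hf.enorm.pow_const p) _

lemma lpPow_sub_le (hp : 0 ≤ p) (hp1 : p ≤ 1) (hf : AEStronglyMeasurable f μ) :
    lpPow p μ (f - g) ≤ lpPow p μ f + lpPow p μ g := by
  simpa only [sub_eq_add_neg, lpPow_neg] using lpPow_add_le (g := -g) hp hp1 hf

lemma lpPow_const_smul [NormedSpace ℝ E] (hp : 0 ≤ p) (c : ℝ) :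
    lpPow p μ (c • f) = ‖c‖ₑ ^ p * lpPow p μ f := by
  simp only [lpPow, Pi.smul_apply, enorm_smul, ENNReal.mul_rpow_of_nonneg _ _ hp]
  exact lintegral_const_mul' _ _ (ENNReal.rpow_ne_top_of_nonneg hp enorm_ne_top)

lemma lpPow_comp_sub_right [AddGroup α] [MeasurableAdd α] [μ.IsAddRightInvariant] (a : α) :
    lpPow p μ (fun x => f (x - a)) = lpPow p μ f :=
  lintegral_sub_right_eq_self (fun x => ‖f x‖ₑ ^ p) a

lemma lpPow_le_of_norm_le_of_support_subset (hp : 0 < p) {C : ℝ} {s : Set α}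
    (hC : ∀ x, ‖f x‖ ≤ C) (hs : Function.support f ⊆ s) :
    lpPow p μ f ≤ ENNReal.ofReal C ^ p * μ s := by
  refine (lintegral_mono fun x => ?_).trans (lintegral_indicator_const_le s _)
  by_cases hx : x ∈ s
  · rw [indicator_of_mem hx, ← ofReal_norm]
    exact ENNReal.rpow_le_rpow (ENNReal.ofReal_le_ofReal (hC x)) hp.le
  · simp [Function.notMem_support.1 (mt (@hs x) hx), ENNReal.zero_rpow_of_pos hp]

lemma lpPow_lt_top_of_memLp (hp : 0 < p) (hf : MemLp f (ENNReal.ofReal p) μ) :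
    lpPow p μ f < ∞ := by
  simpa only [lpPow, ENNReal.toReal_ofReal hp.le] using
    lintegral_rpow_enorm_lt_top_of_eLpNorm_lt_top (by simpa using hp) ENNReal.ofReal_ne_top hf.2

lemma tendsto_lpPow_of_tendsto_lpPow_sub {ι : Type*} {l : Filter ι} {F : ι → α → E}
    (hp : 0 ≤ p) (hp1 : p ≤ 1) (hf : AEStronglyMeasurable f μ)
    (hF : ∀ i, AEStronglyMeasurable (F i) μ) (h : Tendsto (fun i => lpPow p μ (f - F i)) l (𝓝 0)) :
    Tendsto (fun i => lpPow p μ (F i)) l (𝓝 (lpPow p μ f)) := by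
  have lower (i : ι) : lpPow p μ f - lpPow p μ (f - F i) ≤ lpPow p μ (F i) := by
    rw [tsub_le_iff_left]
    simpa only [sub_add_cancel] using
      lpPow_add_le (f := f - F i) (g := F i) hp hp1 (hf.sub (hF i))
  have upper (i : ι) : lpPow p μ (F i) ≤ lpPow p μ f + lpPow p μ (f - F i) := by
    simpa only [sub_sub_cancel] using lpPow_sub_le (g := f - F i) hp hp1 hf
  refine tendsto_of_tendsto_of_tendsto_of_le_of_le ?_ ?_ lower upper
  · simpa using ENNReal.Tendsto.sub tendsto_const_nhds h (Or.inr ENNReal.zero_ne_top)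
  · simpa using h.const_add (lpPow p μ f)

end LpPow

section PNorm

variable {p : ℝ} {g : ℝ → ℝ}

lemma enorm_abs_rpow (hp : 0 ≤ p) (x : ℝ) : ‖|x| ^ p‖ₑ = ‖x‖ₑ ^ p := by
  rw [Real.enorm_rpow_of_nonneg (abs_nonneg x) hp, Real.enorm_abs]

lemma aestronglyMeasurable_abs_rpow (hg : AEStronglyMeasurable g) :
    AEStronglyMeasurable fun x => |g x| ^ p :=
  (hg.norm.aemeasurable.pow_const p).aestronglyMeasurable

lemma memLp'_of_lpPow_lt_top (hp : 0 ≤ p) (hg : AEStronglyMeasurable g)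
    (h : lpPow p volume g < ∞) : MemLp' p g := by
  refine ⟨aestronglyMeasurable_abs_rpow hg, ?_⟩
  simpa only [HasFiniteIntegral, enorm_abs_rpow hp, lpPow] using h

lemma pNorm_eq_toReal_lpPow (hp : 0 ≤ p) (hg : AEStronglyMeasurable g) :
    pNorm p g = (lpPow p volume g).toReal ^ (1 / p) := by
  have h := integral_norm_eq_lintegral_enorm (aestronglyMeasurable_abs_rpow (p := p) hg)
  simp only [Real.norm_of_nonneg (Real.rpow_nonneg (abs_nonneg _) p), enorm_abs_rpow hp] at h
  rw [pNorm, h, lpPow]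

lemma pNorm_nonneg (p : ℝ) (g : ℝ → ℝ) : 0 ≤ pNorm p g :=
  Real.rpow_nonneg (integral_nonneg fun _ => Real.rpow_nonneg (abs_nonneg _) _) _

lemma pNorm_div_le (hp : 0 < p) (hg : AEStronglyMeasurable g) {a : ℝ} (ha : 0 < a) {t : ℝ≥0∞}
    (ht : t ≠ ∞) (h : lpPow p volume g ≤ t * ENNReal.ofReal a ^ p) :
    pNorm p g / a ≤ t.toReal ^ (1 / p) := by
  rw [div_le_iff₀ ha, pNorm_eq_toReal_lpPow hp.le hg]
  calc (lpPow p volume g).toReal ^ (1 / p)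
      ≤ (t * ENNReal.ofReal a ^ p).toReal ^ (1 / p) := by
        gcongr
        exact ENNReal.mul_ne_top ht (ENNReal.rpow_ne_top_of_nonneg hp.le ENNReal.ofReal_ne_top)
    _ = t.toReal ^ (1 / p) * a := by
        rw [ENNReal.toReal_mul, ← ENNReal.toReal_rpow, ENNReal.toReal_ofReal ha.le,
          Real.mul_rpow ENNReal.toReal_nonneg (by positivity), one_div,
          Real.rpow_rpow_inv ha.le hp.ne']

lemma tendsto_toReal_rpow_inv_zero {ι : Type*} {l : Filter ι} {t : ι → ℝ≥0∞} (hp : 0 < p)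
    (ht : Tendsto t l (𝓝 0)) : Tendsto (fun i => (t i).toReal ^ (1 / p)) l (𝓝 0) := by
  have hp' : 0 < 1 / p := one_div_pos.2 hp
  simpa [hp.ne'] using
    ((ENNReal.tendsto_toReal ENNReal.zero_ne_top).comp ht).rpow_const (Or.inr hp'.le)

end PNorm

section SmoothStepTower

theorem exists_fixedPoint_mem_Icc {α : Type*} [CompleteLattice α] (T : α →o α) {a b : α}
    (hab : a ≤ b) (ha : a ≤ T a) (hb : T b ≤ b) : ∃ x ∈ Icc a b, T x = x := by
  set S : α →o α := OrderHom.const α a ⊔ T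
  have hS : a ⊔ T S.lfp = S.lfp := S.map_lfp
  have ha_le : a ≤ S.lfp := le_sup_left.trans_eq hS
  refine ⟨S.lfp, ⟨ha_le, S.lfp_le (sup_le hab hb)⟩, ?_⟩
  rwa [sup_eq_right.2 (ha.trans (T.monotone ha_le))] at hS

/-- The operator sending `Φ` to the sequence of averages
`x ↦ ∫₀¹ Φ (k + 1) (x - h k * t) dt`, on sequences of monotone functions. -/
noncomputable def shiftedAverage (h : ℕ → ℝ) : (ℕ → ℝ →o ℝ≥0∞) →o (ℕ → ℝ →o ℝ≥0∞) where
  toFun Φ k :=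
    { toFun x := ∫⁻ t in Ioc (0 : ℝ) 1, Φ (k + 1) (x - h k * t)
      monotone' _ _ hxy := lintegral_mono fun _ => (Φ (k + 1)).monotone (sub_le_sub_right hxy _) }
  monotone' _ _ hΦ k _ := lintegral_mono fun _ => hΦ (k + 1) _

/-- The unit step at `a`, as a monotone function. -/
noncomputable def unitStep (a : ℝ) : ℝ →o ℝ≥0∞ where
  toFun := (Ici a).indicator 1
  monotone' x y hxy := by
    by_cases hx : a ≤ x
    · simp [hx, hx.trans hxy]
    · simp [hx]

lemma coe_unitStep (a : ℝ) : ⇑(unitStep a) = (Ici a).indicator 1 := rfl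

lemma unitStep_ne_top (a x : ℝ) : unitStep a x ≠ ∞ := by
  by_cases hx : a ≤ x <;> simp [coe_unitStep, hx]

lemma toReal_unitStep (a x : ℝ) : (unitStep a x).toReal = (Ici a).indicator 1 x := by
  by_cases hx : a ≤ x <;> simp [coe_unitStep, hx]

lemma unitStep_le_shiftedAverage {h : ℕ → ℝ} (h_pos : ∀ k, 0 < h k)
    (h_half : ∀ k, 2 * h (k + 1) ≤ h k) :
    (fun k => unitStep (2 * h k)) ≤ shiftedAverage h fun k => unitStep (2 * h k) := by
  refine fun k => indicator_le fun x (hx : 2 * h k ≤ x) => ?_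
  have h_one : ∀ t ∈ Ioc (0 : ℝ) 1, unitStep (2 * h (k + 1)) (x - h k * t) = 1 := fun t ht => by
    have : 2 * h (k + 1) ≤ x - h k * t := by nlinarith [h_pos k, h_half k, ht.2]
    exact indicator_of_mem (mem_Ici.2 this) 1
  calc (1 : ℝ≥0∞) = ∫⁻ _ in Ioc (0 : ℝ) 1, 1 := by simp
    _ ≤ shiftedAverage h (fun k => unitStep (2 * h k)) k x :=
      (setLIntegral_congr_fun measurableSet_Ioc h_one).ge

lemma shiftedAverage_unitStep_le {h : ℕ → ℝ} (h_pos : ∀ k, 0 < h k) :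
    shiftedAverage h (fun _ => unitStep 0) ≤ fun _ => unitStep 0 := by
  intro k x
  calc ∫⁻ t in Ioc (0 : ℝ) 1, unitStep 0 (x - h k * t)
      ≤ ∫⁻ _ in Ioc (0 : ℝ) 1, unitStep 0 x :=
        setLIntegral_mono' measurableSet_Ioc fun t ht =>
          (unitStep 0).monotone (sub_le_self x (mul_nonneg (h_pos k).le ht.1.le))
    _ = unitStep 0 x := by simp

/-- A sequence of monotone steps from `0` to `1`, the `k`-th of which climbs within
`[0, 2 * h k]` and is the convolution of the next one with the normalised indicator function of
`[0, h k]`. Thus `Φ k` is the distribution function of `∑ j ≥ k, h j * U j` for independent `U j`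
uniform on `[0, 1]`. -/
structure IsSmoothStepTower (h : ℕ → ℝ) (Φ : ℕ → ℝ → ℝ) : Prop where
  pos : ∀ k, 0 < h k
  two_mul_succ_le : ∀ k, 2 * h (k + 1) ≤ h k
  monotone : ∀ k, Monotone (Φ k)
  indicator_le : ∀ k, (Ici (2 * h k)).indicator 1 ≤ Φ k
  le_indicator : ∀ k, Φ k ≤ (Ici 0).indicator 1
  eq_average : ∀ k x, Φ k x = ∫ t in (0 : ℝ)..1, Φ (k + 1) (x - h k * t)

theorem exists_isSmoothStepTower {h : ℕ → ℝ} (h_pos : ∀ k, 0 < h k)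
    (h_half : ∀ k, 2 * h (k + 1) ≤ h k) : ∃ Φ, IsSmoothStepTower h Φ := by
  have h_le : (fun k => unitStep (2 * h k)) ≤ fun _ => unitStep 0 := fun k x =>
    indicator_le_indicator_of_subset (Ici_subset_Ici.2 (by linarith [h_pos k]))
      (fun _ => zero_le_one) x
  obtain ⟨Φ, ⟨hΦ_ge, hΦ_le⟩, hΦ⟩ := exists_fixedPoint_mem_Icc (shiftedAverage h) h_le
    (unitStep_le_shiftedAverage h_pos h_half) (shiftedAverage_unitStep_le h_pos)
  have ne_top (k x) : Φ k x ≠ ∞ := ne_top_of_le_ne_top (unitStep_ne_top 0 x) (hΦ_le k x)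
  refine ⟨fun k x => (Φ k x).toReal, h_pos, h_half, fun k x y hxy => ?_, fun k x => ?_,
    fun k x => ?_, fun k x => ?_⟩
  · exact ENNReal.toReal_mono (ne_top k y) ((Φ k).monotone hxy)
  · rw [← toReal_unitStep]
    exact ENNReal.toReal_mono (ne_top k x) (hΦ_ge k x)
  · rw [← toReal_unitStep]
    exact ENNReal.toReal_mono (unitStep_ne_top 0 x) (hΦ_le k x)
  · have h_meas : Measurable fun t => Φ (k + 1) (x - h k * t) :=
      (Φ (k + 1)).monotone.measurable.comp (by fun_prop)
    rw [intervalIntegral.integral_of_le zero_le_one, integral_toReal h_meas.aemeasurable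
      (Eventually.of_forall fun t => (ne_top _ _).lt_top)]
    exact congrArg (fun Ψ => (Ψ k x).toReal) hΦ.symm

section Average

variable {E : Type*} [NormedAddCommGroup E] [NormedSpace ℝ E] {g : ℝ → E} {c : ℝ}

lemma integral_comp_sub_mul_eq_sub (hg : ∀ a b, IntervalIntegrable g volume a b) (hc : c ≠ 0)
    (x : ℝ) : ∫ t in (0 : ℝ)..1, g (x - c * t) =
      c⁻¹ • ((∫ t in (0 : ℝ)..x, g t) - ∫ t in (0 : ℝ)..(x - c), g t) := by
  rw [intervalIntegral.integral_comp_sub_mul g hc,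
    intervalIntegral.integral_interval_sub_left (hg _ _) (hg _ _), mul_one, mul_zero, sub_zero]

lemma continuous_integral_comp_sub_mul (hg : ∀ a b, IntervalIntegrable g volume a b)
    (hc : c ≠ 0) : Continuous fun x => ∫ t in (0 : ℝ)..1, g (x - c * t) := by
  have h_prim := intervalIntegral.continuous_primitive hg 0
  simp only [integral_comp_sub_mul_eq_sub hg hc]
  fun_prop

lemma hasDerivAt_integral_comp_sub_mul [CompleteSpace E] (hg : Continuous g) (hc : c ≠ 0)
    (x : ℝ) : HasDerivAt (fun x => ∫ t in (0 : ℝ)..1, g (x - c * t))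
      (c⁻¹ • (g x - g (x - c))) x := by
  simp only [integral_comp_sub_mul_eq_sub hg.intervalIntegrable hc]
  have h_prim (y : ℝ) : HasDerivAt (fun u => ∫ t in (0 : ℝ)..u, g t) (g y) y :=
    hg.integral_hasStrictDerivAt 0 y |>.hasDerivAt
  exact ((h_prim x).sub ((h_prim (x - c)).comp_sub_const x c)).const_smul c⁻¹

end Average

namespace IsSmoothStepTower

variable {h : ℕ → ℝ} {Φ : ℕ → ℝ → ℝ} (hΦ : IsSmoothStepTower h Φ)

include hΦ

lemma nonneg (k : ℕ) (x : ℝ) : 0 ≤ Φ k x :=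
  (indicator_nonneg (fun _ _ => zero_le_one) x).trans (hΦ.indicator_le k x)

lemma le_one (k : ℕ) (x : ℝ) : Φ k x ≤ 1 :=
  (hΦ.le_indicator k x).trans (indicator_le_self' (fun _ _ => zero_le_one) x)

lemma eq_zero {x : ℝ} (k : ℕ) (hx : x < 0) : Φ k x = 0 :=
  ((hΦ.le_indicator k x).trans_eq (indicator_of_notMem (notMem_Ici.2 hx) _)).antisymm
    (hΦ.nonneg k x)

lemma eq_one {x : ℝ} {k : ℕ} (hx : 2 * h k ≤ x) : Φ k x = 1 :=
  (hΦ.le_one k x).antisymm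
    ((indicator_of_mem (mem_Ici.2 hx) _).symm.trans_le (hΦ.indicator_le k x))

lemma continuous (k : ℕ) : Continuous (Φ k) := by
  rw [funext (hΦ.eq_average k)]
  exact continuous_integral_comp_sub_mul (fun _ _ => (hΦ.monotone _).intervalIntegrable)
    (hΦ.pos k).ne'

lemma hasDerivAt (k : ℕ) (x : ℝ) :
    HasDerivAt (Φ k) ((h k)⁻¹ • (Φ (k + 1) x - Φ (k + 1) (x - h k))) x := by
  rw [funext (hΦ.eq_average k)]
  exact hasDerivAt_integral_comp_sub_mul (hΦ.continuous (k + 1)) (hΦ.pos k).ne' x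

lemma deriv_eq (k : ℕ) :
    deriv (Φ k) = (h k)⁻¹ • (Φ (k + 1) - fun x => Φ (k + 1) (x - h k)) :=
  funext fun x => (hΦ.hasDerivAt k x).deriv

lemma contDiff (k : ℕ) : ContDiff ℝ (⊤ : ℕ∞) (Φ k) := by
  rw [contDiff_infty]
  intro n
  induction n generalizing k with
  | zero => exact contDiff_zero.2 (hΦ.continuous k)
  | succ n ih =>
    push_cast
    rw [contDiff_succ_iff_deriv, hΦ.deriv_eq]
    have := ih (k + 1)
    exact ⟨fun x => (hΦ.hasDerivAt k x).differentiableAt, by simp,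
      contDiff_const.smul (this.sub (by fun_prop))⟩

lemma iteratedDeriv_succ_eq (n k : ℕ) :
    iteratedDeriv (n + 1) (Φ k) = (h k)⁻¹ •
      (iteratedDeriv n (Φ (k + 1)) - fun x => iteratedDeriv n (Φ (k + 1)) (x - h k)) := by
  have h_smooth : ContDiff ℝ n (Φ (k + 1)) := contDiff_infty.1 (hΦ.contDiff _) n
  have h_shift : ContDiff ℝ n fun x => Φ (k + 1) (x - h k) := by fun_prop
  have h_sub : ContDiff ℝ n (Φ (k + 1) - fun x => Φ (k + 1) (x - h k)) := h_smooth.sub h_shift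
  funext x
  rw [iteratedDeriv_succ', hΦ.deriv_eq, iteratedDeriv_const_smul h_sub.contDiffAt,
    iteratedDeriv_sub h_smooth.contDiffAt h_shift.contDiffAt, iteratedDeriv_comp_sub_const]
  rfl

lemma lpPow_indicator_sub_le {p : ℝ} (hp : 0 < p) (k : ℕ) :
    lpPow p volume ((Ici 0).indicator 1 - Φ k) ≤ ENNReal.ofReal (2 * h k) := by
  refine (lpPow_le_of_norm_le_of_support_subset hp (C := 1) (s := Icc 0 (2 * h k)) (fun x => ?_)
    (Function.support_subset_iff'.2 fun x hx => ?_)).trans_eq (by simp)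
  · have h_le : (Ici (0 : ℝ)).indicator 1 x ≤ (1 : ℝ) :=
      indicator_le_self' (fun _ _ => zero_le_one) x
    rw [Pi.sub_apply, Real.norm_of_nonneg (sub_nonneg.2 (hΦ.le_indicator k x))]
    linarith [hΦ.nonneg k x]
  · rcases not_and_or.1 hx with hx | hx
    · simp [hΦ.eq_zero k (not_le.1 hx), hx]
    · have : 0 ≤ x := by linarith [hΦ.pos k]
      simp [hΦ.eq_one (not_le.1 hx).le, this]

lemma support_deriv_subset (k : ℕ) :
    Function.support (deriv (Φ k)) ⊆ Icc 0 (2 * h k) := by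
  refine Function.support_subset_iff'.2 fun x hx => ?_
  have h_eq : Φ (k + 1) x = Φ (k + 1) (x - h k) := by
    rcases not_and_or.1 hx with hx | hx
    · rw [hΦ.eq_zero _ (by linarith), hΦ.eq_zero _ (by linarith [hΦ.pos k])]
    · rw [hΦ.eq_one (by linarith [hΦ.two_mul_succ_le k, hΦ.pos k]),
        hΦ.eq_one (by linarith [hΦ.two_mul_succ_le k])]
  simp [hΦ.deriv_eq, h_eq]

lemma norm_deriv_le (k : ℕ) (x : ℝ) : ‖deriv (Φ k) x‖ ≤ (h k)⁻¹ := by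
  have h_diff : |Φ (k + 1) x - Φ (k + 1) (x - h k)| ≤ 1 := by
    rw [abs_sub_le_iff]
    constructor <;> linarith [hΦ.nonneg (k + 1) x, hΦ.le_one (k + 1) x,
      hΦ.nonneg (k + 1) (x - h k), hΦ.le_one (k + 1) (x - h k)]
  rw [(hΦ.hasDerivAt k x).deriv, norm_smul, norm_inv, Real.norm_of_nonneg (hΦ.pos k).le]
  exact mul_le_of_le_one_right (inv_nonneg.2 (hΦ.pos k).le) h_diff

lemma lpPow_deriv_le {p : ℝ} (hp : 0 < p) (k : ℕ) :
    lpPow p volume (deriv (Φ k)) ≤ ENNReal.ofReal (2 * h k ^ (1 - p)) := by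
  refine (lpPow_le_of_norm_le_of_support_subset hp (hΦ.norm_deriv_le k)
    (hΦ.support_deriv_subset k)).trans_eq ?_
  have hk := hΦ.pos k
  rw [Real.volume_Icc, ENNReal.ofReal_rpow_of_pos (inv_pos.2 hk),
    ← ENNReal.ofReal_mul (by positivity), Real.rpow_sub hk, Real.rpow_one, Real.inv_rpow hk.le]
  ring_nf

lemma lpPow_iteratedDeriv_succ_le {p : ℝ} (hp : 0 < p) (hp1 : p ≤ 1) (n k : ℕ) :
    lpPow p volume (iteratedDeriv (n + 1) (Φ k)) ≤ ENNReal.ofReal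
      ((∏ j ∈ Finset.range n, 2 * h (k + j) ^ (-p)) * (2 * h (k + n) ^ (1 - p))) := by
  induction n generalizing k with
  | zero => simpa [iteratedDeriv_one] using hΦ.lpPow_deriv_le hp k
  | succ n ih =>
    have hk := hΦ.pos k
    have h_meas : AEStronglyMeasurable (iteratedDeriv (n + 1) (Φ (k + 1))) :=
      ((hΦ.contDiff _).continuous_iteratedDeriv _ (mod_cast le_top)).aestronglyMeasurable
    calc lpPow p volume (iteratedDeriv (n + 1 + 1) (Φ k))
        ≤ ‖(h k)⁻¹‖ₑ ^ p * (lpPow p volume (iteratedDeriv (n + 1) (Φ (k + 1))) +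
            lpPow p volume (iteratedDeriv (n + 1) (Φ (k + 1)))) := by
          rw [hΦ.iteratedDeriv_succ_eq, lpPow_const_smul hp.le]
          gcongr
          exact (lpPow_sub_le hp.le hp1 h_meas).trans_eq (by rw [lpPow_comp_sub_right])
      _ = ENNReal.ofReal (2 * h k ^ (-p)) *
            lpPow p volume (iteratedDeriv (n + 1) (Φ (k + 1))) := by
          rw [Real.enorm_of_nonneg (inv_nonneg.2 hk.le),
            ENNReal.ofReal_rpow_of_pos (inv_pos.2 hk), Real.inv_rpow hk.le, ← Real.rpow_neg hk.le,
            ENNReal.ofReal_mul zero_le_two, ENNReal.ofReal_ofNat, ← two_mul]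
          ring
      _ ≤ _ := by
          grw [ih (k + 1), ← ENNReal.ofReal_mul (by positivity), Finset.prod_range_succ']
          simp only [add_zero, add_assoc, add_comm 1]
          exact (congrArg _ (by ring)).le

end IsSmoothStepTower

end SmoothStepTower

section WindowWidths

variable {p : ℝ}

theorem exists_seq_of_forall_prefix {α : Type*} {P : ∀ n, (Fin n → α) → α → Prop}
    (H : ∀ n s, ∃ x, P n s x) : ∃ u : ℕ → α, ∀ n, P n (fun i => u i) (u n) := by
  choose next h_next using H
  let u : ℕ → α := Nat.strongRec fun n u => next n fun i => u i i.isLt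
  have hu (n : ℕ) : u n = next n fun i => u i := Nat.strongRec_eq _ n
  exact ⟨u, fun n => hu n ▸ h_next n _⟩

theorem exists_window_widths (hp1 : p < 1) {δ : ℕ → ℝ} (hδ : ∀ n, 0 < δ n) :
    ∃ h : ℕ → ℝ, (∀ n, 0 < h n) ∧ (∀ n, 2 * h (n + 1) ≤ h n) ∧ 2 * h 0 ≤ δ 0 ∧
      ∀ n, (∏ j ∈ Finset.range n, 2 * h j ^ (-p)) * (2 * h n ^ (1 - p)) ≤ δ (n + 1) := by
  have h_lin (b : ℝ) (hb : 0 < b) : ∀ᶠ x in 𝓝[>] (0 : ℝ), 2 * x ≤ b :=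
    nhdsWithin_le_nhds <| (eventually_le_nhds (half_pos hb)).mono fun x hx => by linarith
  have h_rpow (C b : ℝ) (hb : 0 < b) : ∀ᶠ x in 𝓝[>] (0 : ℝ), C * (2 * x ^ (1 - p)) ≤ b := by
    have h_tendsto : Tendsto (fun x : ℝ => C * (2 * x ^ (1 - p))) (𝓝 0) (𝓝 0) := by
      simpa [Real.zero_rpow (sub_pos.2 hp1).ne'] using
        (((continuous_id.rpow_const fun _ => Or.inr (sub_pos.2 hp1).le).const_mul 2).const_mul
          C).tendsto (0 : ℝ)
    exact nhdsWithin_le_nhds (h_tendsto.eventually_le_const hb)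
  obtain ⟨h, hh⟩ := exists_seq_of_forall_prefix
    (P := fun n (s : Fin n → ℝ) x => 0 < x ∧ 2 * x ≤ δ 0 ∧ (∀ i, 0 < s i → 2 * x ≤ s i) ∧
      (∏ i, 2 * s i ^ (-p)) * (2 * x ^ (1 - p)) ≤ δ (n + 1)) fun n s =>
    (eventually_mem_nhdsWithin.and <| (h_lin _ (hδ 0)).and <|
      (eventually_all.2 fun i => eventually_imp_distrib_left.2 (h_lin (s i))).and <|
      h_rpow _ _ (hδ (n + 1))).exists
  refine ⟨h, fun n => (hh n).1, fun n => (hh (n + 1)).2.2.1 (Fin.last n) (hh n).1, (hh 0).2.1,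
    fun n => ?_⟩
  simpa only [Finset.prod_range] using (hh n).2.2.2

end WindowWidths

section FlatApproximation

variable {p : ℝ} {η η' : ℕ → ℝ≥0∞} {f f' g g' : ℝ → ℝ}

/-- `g` is a smooth approximation of `f` in `L^p` which is flat in the sense that its derivatives
are small in `L^p`. The tolerances `η` bound `p`-th powers: `η 0` controls `f - g`, and `η n`
controls the `n`-th derivative of `g` for `1 ≤ n`. -/
structure IsFlatApprox (p : ℝ) (η : ℕ → ℝ≥0∞) (f g : ℝ → ℝ) : Prop where
  contDiff : ContDiff ℝ (⊤ : ℕ∞) g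
  error_le : lpPow p volume (f - g) ≤ η 0
  iteratedDeriv_succ_le : ∀ n, lpPow p volume (iteratedDeriv (n + 1) g) ≤ η (n + 1)

/-- `f` has flat smooth approximations to within any prescribed sequence of tolerances. For `p ≥ 1`
only the almost everywhere constant functions have them; for `p < 1` so do all step functions. -/
structure FlatlyApproximable (p : ℝ) (f : ℝ → ℝ) : Prop where
  aestronglyMeasurable : AEStronglyMeasurable f
  exists_isFlatApprox : ∀ η : ℕ → ℝ≥0∞, (∀ n, η n ≠ 0) → ∃ g, IsFlatApprox p η f g

namespace IsFlatApprox

lemma mono (h : IsFlatApprox p η f g) (hη : ∀ n, η n ≤ η' n) : IsFlatApprox p η' f g :=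
  ⟨h.contDiff, h.error_le.trans (hη 0),
    fun n => (h.iteratedDeriv_succ_le n).trans (hη (n + 1))⟩

lemma contDiffAt (h : IsFlatApprox p η f g) (n : ℕ) (x : ℝ) : ContDiffAt ℝ n g x :=
  (contDiff_infty.1 h.contDiff n).contDiffAt

lemma aestronglyMeasurable_iteratedDeriv (h : IsFlatApprox p η f g) (n : ℕ) :
    AEStronglyMeasurable (iteratedDeriv n g) :=
  (h.contDiff.continuous_iteratedDeriv n (mod_cast le_top)).aestronglyMeasurable

lemma aestronglyMeasurable (h : IsFlatApprox p η f g) : AEStronglyMeasurable g :=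
  h.contDiff.continuous.aestronglyMeasurable

lemma add (hp : 0 ≤ p) (hp1 : p ≤ 1) (hf : AEStronglyMeasurable f)
    (h : IsFlatApprox p η f g) (h' : IsFlatApprox p η' f' g') :
    IsFlatApprox p (η + η') (f + f') (g + g') where
  contDiff := h.contDiff.add h'.contDiff
  error_le := by
    rw [add_sub_add_comm]
    exact (lpPow_add_le hp hp1 (hf.sub h.aestronglyMeasurable)).trans
      (add_le_add h.error_le h'.error_le)
  iteratedDeriv_succ_le n := by
    have h_deriv : iteratedDeriv (n + 1) (g + g') =
        iteratedDeriv (n + 1) g + iteratedDeriv (n + 1) g' :=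
      funext fun x => iteratedDeriv_add (h.contDiffAt (n + 1) x) (h'.contDiffAt (n + 1) x)
    rw [h_deriv]
    exact (lpPow_add_le hp hp1 (h.aestronglyMeasurable_iteratedDeriv _)).trans
      (add_le_add (h.iteratedDeriv_succ_le n) (h'.iteratedDeriv_succ_le n))

lemma const_smul (hp : 0 ≤ p) (c : ℝ) (h : IsFlatApprox p η f g) :
    IsFlatApprox p (‖c‖ₑ ^ p • η) (c • f) (c • g) where
  contDiff := contDiff_const.smul h.contDiff
  error_le := by
    rw [← smul_sub, lpPow_const_smul hp]
    exact mul_le_mul_right h.error_le _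
  iteratedDeriv_succ_le n := by
    have h_deriv : iteratedDeriv (n + 1) (c • g) = c • iteratedDeriv (n + 1) g :=
      funext fun x => iteratedDeriv_const_smul (h.contDiffAt (n + 1) x) c
    rw [h_deriv, lpPow_const_smul hp]
    exact mul_le_mul_right (h.iteratedDeriv_succ_le n) _

lemma sub (hp : 0 ≤ p) (hp1 : p ≤ 1) (hf : AEStronglyMeasurable f)
    (h : IsFlatApprox p η f g) (h' : IsFlatApprox p η' f' g') :
    IsFlatApprox p (η + η') (f - f') (g - g') := by
  simpa [sub_eq_add_neg] using h.add hp hp1 hf (h'.const_smul hp (-1))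

lemma comp_sub_right (h : IsFlatApprox p η f g) (a : ℝ) :
    IsFlatApprox p η (fun x => f (x - a)) fun x => g (x - a) where
  contDiff := h.contDiff.comp (contDiff_id.sub contDiff_const)
  error_le := (lpPow_comp_sub_right (f := f - g) a).trans_le h.error_le
  iteratedDeriv_succ_le n := by
    rw [iteratedDeriv_comp_sub_const, lpPow_comp_sub_right]
    exact h.iteratedDeriv_succ_le n

end IsFlatApprox

namespace FlatlyApproximable

lemma zero (hp : 0 < p) : FlatlyApproximable p 0 where
  aestronglyMeasurable := aestronglyMeasurable_zero
  exists_isFlatApprox η _ := ⟨0, contDiff_const, by simp [lpPow_zero hp], fun n => by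
    rw [show iteratedDeriv (n + 1) (0 : ℝ → ℝ) = 0 from funext fun _ => by simp, lpPow_zero hp]
    exact zero_le⟩

lemma congr_ae (h : FlatlyApproximable p f) (hf : f =ᵐ[volume] f') : FlatlyApproximable p f' where
  aestronglyMeasurable := h.aestronglyMeasurable.congr hf
  exists_isFlatApprox η hη := by
    obtain ⟨g, hg⟩ := h.exists_isFlatApprox η hη
    exact ⟨g, hg.contDiff, (lpPow_congr_ae (hf.sub .rfl)).ge.trans hg.error_le,
      hg.iteratedDeriv_succ_le⟩

lemma add (hp : 0 ≤ p) (hp1 : p ≤ 1) (h : FlatlyApproximable p f) (h' : FlatlyApproximable p f') :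
    FlatlyApproximable p (f + f') where
  aestronglyMeasurable := h.aestronglyMeasurable.add h'.aestronglyMeasurable
  exists_isFlatApprox η hη := by
    have hη_half (n : ℕ) : η n / 2 ≠ 0 := (ENNReal.half_pos (hη n)).ne'
    obtain ⟨g, hg⟩ := h.exists_isFlatApprox (fun n => η n / 2) hη_half
    obtain ⟨g', hg'⟩ := h'.exists_isFlatApprox (fun n => η n / 2) hη_half
    exact ⟨g + g', (hg.add hp hp1 h.aestronglyMeasurable hg').mono
      fun n => (ENNReal.add_halves (η n)).le⟩

lemma const_smul (hp : 0 ≤ p) (c : ℝ) (h : FlatlyApproximable p f) :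
    FlatlyApproximable p (c • f) where
  aestronglyMeasurable := h.aestronglyMeasurable.const_smul c
  exists_isFlatApprox η hη := by
    have hc : ‖c‖ₑ ^ p ≠ ∞ := ENNReal.rpow_ne_top_of_nonneg hp enorm_ne_top
    obtain ⟨g, hg⟩ := h.exists_isFlatApprox (fun n => η n / ‖c‖ₑ ^ p)
      fun n => (ENNReal.div_pos (hη n) hc).ne'
    exact ⟨c • g, (hg.const_smul hp c).mono fun n => ENNReal.mul_div_le⟩

lemma sub (hp : 0 ≤ p) (hp1 : p ≤ 1) (h : FlatlyApproximable p f) (h' : FlatlyApproximable p f') :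
    FlatlyApproximable p (f - f') := by
  simpa only [sub_eq_add_neg, neg_one_smul] using h.add hp hp1 (h'.const_smul hp (-1))

lemma sum {ι : Type*} (hp : 0 < p) (hp1 : p ≤ 1) (s : Finset ι) {f : ι → ℝ → ℝ}
    (h : ∀ i ∈ s, FlatlyApproximable p (f i)) : FlatlyApproximable p (∑ i ∈ s, f i) :=
  Finset.sum_induction f (FlatlyApproximable p) (fun _ _ h h' => h.add hp.le hp1 h') (zero hp) h

lemma comp_sub_right (h : FlatlyApproximable p f) (a : ℝ) :
    FlatlyApproximable p fun x => f (x - a) where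
  aestronglyMeasurable :=
    h.aestronglyMeasurable.comp_measurePreserving (measurePreserving_sub_right volume a)
  exists_isFlatApprox η hη := by
    obtain ⟨g, hg⟩ := h.exists_isFlatApprox η hη
    exact ⟨fun x => g (x - a), hg.comp_sub_right a⟩

end FlatlyApproximable

theorem flatlyApproximable_indicator_Ici (hp : 0 < p) (hp1 : p < 1) (a : ℝ) :
    FlatlyApproximable p ((Ici a).indicator 1) := by
  suffices h_zero : FlatlyApproximable p ((Ici 0).indicator 1) by
    convert h_zero.comp_sub_right a using 2 with x
    simp [indicator_apply]
  refine ⟨(stronglyMeasurable_one.indicator measurableSet_Ici).aestronglyMeasurable, fun η hη => ?_⟩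
  have h_real (n : ℕ) : ∃ r : ℝ, 0 < r ∧ ENNReal.ofReal r ≤ η n := by
    obtain ⟨r, hr, hr_lt⟩ := ENNReal.lt_iff_exists_nnreal_btwn.1 (pos_iff_ne_zero.2 (hη n))
    exact ⟨r, mod_cast hr, by simpa using hr_lt.le⟩
  choose δ hδ hδη using h_real
  obtain ⟨h, h_pos, h_half, h_zero, h_succ⟩ := exists_window_widths hp1 hδ
  obtain ⟨Φ, hΦ⟩ := exists_isSmoothStepTower h_pos h_half
  refine ⟨Φ 0, hΦ.contDiff 0, ?_, fun n => ?_⟩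
  · exact (hΦ.lpPow_indicator_sub_le hp 0).trans
      ((ENNReal.ofReal_le_ofReal h_zero).trans (hδη 0))
  · refine (hΦ.lpPow_iteratedDeriv_succ_le hp hp1.le n 0).trans
      ((ENNReal.ofReal_le_ofReal ?_).trans (hδη (n + 1)))
    simpa only [zero_add] using h_succ n

theorem flatlyApproximable_indicator_Icc (hp : 0 < p) (hp1 : p < 1) (a b : ℝ) :
    FlatlyApproximable p ((Icc a b).indicator 1) := by
  rcases lt_or_ge b a with h | h
  · simpa only [Icc_eq_empty_of_lt h, indicator_empty'] using FlatlyApproximable.zero hp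
  · have h_Ico : (Ici a).indicator 1 - (Ici b).indicator 1 = (Ico a b).indicator (1 : ℝ → ℝ) := by
      rw [← Ici_sdiff_Ici, indicator_sdiff (Ici_subset_Ici.2 h)]
    exact ((flatlyApproximable_indicator_Ici hp hp1 a).sub hp.le hp1.le
      (flatlyApproximable_indicator_Ici hp hp1 b)).congr_ae
        (h_Ico.eventuallyEq.trans (indicator_ae_eq_of_ae_eq_set Ico_ae_eq_Icc))

theorem flatlyApproximable_sum_indicator_Icc (hp : 0 < p) (hp1 : p < 1) {ι : Type*} (s : Finset ι)
    (c A B : ι → ℝ) : FlatlyApproximable p (∑ k ∈ s, c k • (Icc (A k) (B k)).indicator 1) :=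
  FlatlyApproximable.sum hp hp1.le s fun k _ =>
    (flatlyApproximable_indicator_Icc hp hp1 (A k) (B k)).const_smul hp.le (c k)

end FlatApproximation

section Weights

variable {p : ℝ} {M : ℕ → ℝ} {f g : ℝ → ℝ} {t : ℝ≥0∞}

/-- The sequence of tolerances for which `IsFlatApprox` means that `‖f - g‖_p / M 0` and
`‖g⁽ⁿ⁾‖_p / M n` for `1 ≤ n` are all at most `t ^ (1 / p)`. -/
noncomputable def weightTolerance (p : ℝ) (M : ℕ → ℝ) (t : ℝ≥0∞) (n : ℕ) : ℝ≥0∞ :=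
  t * ENNReal.ofReal (M n) ^ p

lemma weightTolerance_add (s t : ℝ≥0∞) :
    weightTolerance p M s + weightTolerance p M t = weightTolerance p M (s + t) :=
  funext fun _ => (add_mul _ _ _).symm

lemma weightTolerance_ne_top (hp : 0 ≤ p) (ht : t ≠ ∞) (n : ℕ) : weightTolerance p M t n ≠ ∞ :=
  ENNReal.mul_ne_top ht (ENNReal.rpow_ne_top_of_nonneg hp ENNReal.ofReal_ne_top)

lemma weightTolerance_ne_zero (hM : ∀ n, 0 < M n) (ht : t ≠ 0) (n : ℕ) :
    weightTolerance p M t n ≠ 0 :=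
  mul_ne_zero ht (ENNReal.rpow_pos (ENNReal.ofReal_pos.2 (hM n)) ENNReal.ofReal_ne_top).ne'

namespace IsFlatApprox

lemma pNorm_iteratedDeriv_succ_div_le (hp : 0 < p) (hM : ∀ n, 0 < M n) (ht : t ≠ ∞)
    (h : IsFlatApprox p (weightTolerance p M t) f g) (n : ℕ) :
    pNorm p (iteratedDeriv (n + 1) g) / M (n + 1) ≤ t.toReal ^ (1 / p) :=
  pNorm_div_le hp (h.aestronglyMeasurable_iteratedDeriv _) (hM _) ht
    (h.iteratedDeriv_succ_le n)

lemma iSup_pNorm_iteratedDeriv_succ_div_le (hp : 0 < p) (hM : ∀ n, 0 < M n) (ht : t ≠ ∞)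
    (h : IsFlatApprox p (weightTolerance p M t) f g) :
    ⨆ n, pNorm p (iteratedDeriv (n + 1) g) / M (n + 1) ≤ t.toReal ^ (1 / p) :=
  ciSup_le (h.pNorm_iteratedDeriv_succ_div_le hp hM ht)

lemma pNorm_iteratedDeriv_div_le (hp : 0 < p) (hM : ∀ n, 0 < M n) (ht : t ≠ ∞)
    (h : IsFlatApprox p (weightTolerance p M t) f g) (n : ℕ) :
    pNorm p (iteratedDeriv n g) / M n ≤ max (pNorm p g / M 0) (t.toReal ^ (1 / p)) := by
  cases n with
  | zero => exact iteratedDeriv_zero (f := g) ▸ le_max_left _ _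
  | succ n => exact (h.pNorm_iteratedDeriv_succ_div_le hp hM ht n).trans (le_max_right _ _)

lemma bddAbove_range_pNorm_iteratedDeriv_div (hp : 0 < p) (hM : ∀ n, 0 < M n) (ht : t ≠ ∞)
    (h : IsFlatApprox p (weightTolerance p M t) f g) :
    BddAbove (range fun n => pNorm p (iteratedDeriv n g) / M n) :=
  ⟨_, forall_mem_range.2 (h.pNorm_iteratedDeriv_div_le hp hM ht)⟩

lemma MNorm_le_max (hp : 0 < p) (hM : ∀ n, 0 < M n) (ht : t ≠ ∞)
    (h : IsFlatApprox p (weightTolerance p M t) f g) :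
    MNorm p M g ≤ max (pNorm p g / M 0) (t.toReal ^ (1 / p)) :=
  ciSup_le (h.pNorm_iteratedDeriv_div_le hp hM ht)

lemma pNorm_div_le_MNorm (hp : 0 < p) (hM : ∀ n, 0 < M n) (ht : t ≠ ∞)
    (h : IsFlatApprox p (weightTolerance p M t) f g) : pNorm p g / M 0 ≤ MNorm p M g := by
  simpa only [MNorm, iteratedDeriv_zero] using
    le_ciSup (h.bddAbove_range_pNorm_iteratedDeriv_div hp hM ht) 0

lemma MNorm_sub_le {s : ℝ≥0∞} {g' : ℝ → ℝ} (hp : 0 < p) (hp1 : p ≤ 1) (hM : ∀ n, 0 < M n)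
    (ht : t ≠ ∞) (hs : s ≠ ∞) (hf : AEStronglyMeasurable f)
    (h : IsFlatApprox p (weightTolerance p M t) f g)
    (h' : IsFlatApprox p (weightTolerance p M s) f g') :
    MNorm p M (g - g') ≤ (t + s).toReal ^ (1 / p) := by
  have h_sub : IsFlatApprox p (weightTolerance p M (t + s)) 0 (g - g') := by
    simpa only [sub_self, weightTolerance_add] using h.sub hp.le hp1 hf h'
  have hts : t + s ≠ ∞ := ENNReal.add_ne_top.2 ⟨ht, hs⟩
  refine (h_sub.MNorm_le_max hp hM hts).trans (max_le ?_ le_rfl)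
  refine pNorm_div_le hp h_sub.aestronglyMeasurable (hM 0) hts ?_
  simpa only [weightTolerance, zero_sub, lpPow_neg] using h_sub.error_le

lemma memLp'_iteratedDeriv (hp : 0 ≤ p) (hp1 : p ≤ 1) {η : ℕ → ℝ≥0∞} (hη : ∀ n, η n ≠ ∞)
    (hf : AEStronglyMeasurable f) (hf_lt : lpPow p volume f < ∞) (h : IsFlatApprox p η f g)
    (n : ℕ) : MemLp' p (iteratedDeriv n g) := by
  refine memLp'_of_lpPow_lt_top hp (h.aestronglyMeasurable_iteratedDeriv n) ?_
  cases n with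
  | zero =>
    calc lpPow p volume (iteratedDeriv 0 g) = lpPow p volume (f - (f - g)) := by
          rw [sub_sub_cancel, iteratedDeriv_zero]
      _ ≤ lpPow p volume f + η 0 := (lpPow_sub_le hp hp1 hf).trans (by grw [h.error_le])
      _ < ∞ := ENNReal.add_lt_top.2 ⟨hf_lt, (hη 0).lt_top⟩
  | succ n => exact (h.iteratedDeriv_succ_le n).trans_lt (hη (n + 1)).lt_top

end IsFlatApprox

end Weights

section Sequences

variable {p : ℝ} {M : ℕ → ℝ} {f : ℝ → ℝ}

/-- `F i` is a flat approximation of `f` to within the weighted tolerances at level `t i`, where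
`t i` tends to `0`. -/
structure IsFlatApproxSeq (p : ℝ) (M : ℕ → ℝ) (t : ℕ → ℝ≥0∞) (f : ℝ → ℝ) (F : ℕ → ℝ → ℝ) :
    Prop where
  ne_top : ∀ i, t i ≠ ∞
  tendsto_zero : Tendsto t atTop (𝓝 0)
  isFlatApprox : ∀ i, IsFlatApprox p (weightTolerance p M (t i)) f (F i)

lemma FlatlyApproximable.exists_isFlatApproxSeq (hf : FlatlyApproximable p f)
    (hM : ∀ n, 0 < M n) : ∃ t F, IsFlatApproxSeq p M t f F := by
  obtain ⟨t, -, ht, ht_zero⟩ := exists_seq_strictAnti_tendsto' (zero_lt_one' ℝ≥0∞)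
  choose F hF using fun i =>
    hf.exists_isFlatApprox _ (weightTolerance_ne_zero (p := p) hM (ht i).1.ne')
  exact ⟨t, F, fun i => (ht i).2.ne_top, ht_zero, hF⟩

namespace IsFlatApproxSeq

variable {F : ℕ → ℝ → ℝ} {t : ℕ → ℝ≥0∞} (hF : IsFlatApproxSeq p M t f F)

include hF

lemma aestronglyMeasurable (i : ℕ) : AEStronglyMeasurable (F i) :=
  (hF.isFlatApprox i).aestronglyMeasurable

lemma tendsto_lpPow_sub (hp : 0 ≤ p) :
    Tendsto (fun i => lpPow p volume (f - F i)) atTop (𝓝 0) := by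
  have h_tolerance : Tendsto (fun i => weightTolerance p M (t i) 0) atTop (𝓝 0) := by
    simpa [weightTolerance] using ENNReal.Tendsto.mul_const hF.tendsto_zero
      (Or.inr (ENNReal.rpow_ne_top_of_nonneg hp ENNReal.ofReal_ne_top))
  exact tendsto_of_tendsto_of_tendsto_of_le_of_le tendsto_const_nhds h_tolerance
    (fun _ => zero_le) fun i => (hF.isFlatApprox i).error_le

lemma tendsto_pNorm_sub (hp : 0 < p) (hf : AEStronglyMeasurable f) :
    Tendsto (fun i => pNorm p (f - F i)) atTop (𝓝 0) := by
  simp only [pNorm_eq_toReal_lpPow hp.le (hf.sub (hF.aestronglyMeasurable _))]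
  exact tendsto_toReal_rpow_inv_zero hp (hF.tendsto_lpPow_sub hp.le)

lemma tendsto_pNorm (hp : 0 < p) (hp1 : p ≤ 1) (hf : AEStronglyMeasurable f)
    (hf_lt : lpPow p volume f < ∞) : Tendsto (fun i => pNorm p (F i)) atTop (𝓝 (pNorm p f)) := by
  simp only [pNorm_eq_toReal_lpPow hp.le (hF.aestronglyMeasurable _),
    pNorm_eq_toReal_lpPow hp.le hf]
  refine ((ENNReal.tendsto_toReal hf_lt.ne).comp ?_).rpow_const (Or.inr (one_div_pos.2 hp).le)
  exact tendsto_lpPow_of_tendsto_lpPow_sub hp.le hp1 hf hF.aestronglyMeasurable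
    (hF.tendsto_lpPow_sub hp.le)

lemma tendsto_iSup_pNorm_iteratedDeriv_succ_div (hp : 0 < p) (hM : ∀ n, 0 < M n) :
    Tendsto (fun i => ⨆ n, pNorm p (iteratedDeriv (n + 1) (F i)) / M (n + 1)) atTop (𝓝 0) :=
  squeeze_zero (fun _ => Real.iSup_nonneg fun _ => div_nonneg (pNorm_nonneg p _) (hM _).le)
    (fun i => (hF.isFlatApprox i).iSup_pNorm_iteratedDeriv_succ_div_le hp hM (hF.ne_top i))
    (tendsto_toReal_rpow_inv_zero hp hF.tendsto_zero)

lemma exists_forall_MNorm_sub_lt (hp : 0 < p) (hp1 : p ≤ 1) (hM : ∀ n, 0 < M n)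
    (hf : AEStronglyMeasurable f) {ε : ℝ} (hε : 0 < ε) :
    ∃ N, ∀ i ≥ N, ∀ j ≥ N, MNorm p M (F i - F j) < ε := by
  have h_pair : Tendsto (fun ij : ℕ × ℕ => t ij.1 + t ij.2) atTop (𝓝 0) := by
    rw [← prod_atTop_atTop_eq]
    simpa using (hF.tendsto_zero.comp tendsto_fst).add (hF.tendsto_zero.comp tendsto_snd)
  obtain ⟨N, hN⟩ := eventually_atTop_prod_self'.1
    ((tendsto_toReal_rpow_inv_zero hp h_pair).eventually_lt_const hε)
  exact ⟨N, fun i hi j hj => ((hF.isFlatApprox i).MNorm_sub_le hp hp1 hM (hF.ne_top i)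
    (hF.ne_top j) hf (hF.isFlatApprox j)).trans_lt (hN i hi j hj)⟩

lemma tendsto_MNorm (hp : 0 < p) (hp1 : p ≤ 1) (hM : ∀ n, 0 < M n) (hf : AEStronglyMeasurable f)
    (hf_lt : lpPow p volume f < ∞) :
    Tendsto (fun i => MNorm p M (F i)) atTop (𝓝 (pNorm p f / M 0)) := by
  have h_zeroth : Tendsto (fun i => pNorm p (F i) / M 0) atTop (𝓝 (pNorm p f / M 0)) :=
    (hF.tendsto_pNorm hp hp1 hf hf_lt).div_const (M 0)
  refine tendsto_of_tendsto_of_tendsto_of_le_of_le h_zeroth ?_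
    (fun i => (hF.isFlatApprox i).pNorm_div_le_MNorm hp hM (hF.ne_top i))
    fun i => (hF.isFlatApprox i).MNorm_le_max hp hM (hF.ne_top i)
  simpa only [max_eq_left (div_nonneg (pNorm_nonneg p f) (hM 0).le)] using
    h_zeroth.max (tendsto_toReal_rpow_inv_zero hp hF.tendsto_zero)

end IsFlatApproxSeq

end Sequences

lemma lpPow_sum_indicator_Icc_lt_top {p : ℝ} (hp : 0 < p) {ι : Type*} (s : Finset ι)
    (c A B : ι → ℝ) :
    lpPow p volume (∑ k ∈ s, c k • (Icc (A k) (B k)).indicator (1 : ℝ → ℝ)) < ∞ :=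
  lpPow_lt_top_of_memLp hp <| memLp_finsetSum' s fun k _ =>
    (memLp_indicator_const _ measurableSet_Icc (1 : ℝ)
      (Or.inr measure_Icc_lt_top.ne)).const_smul (c k)

theorem step_function_approx_general (p : ℝ) (hp : 0 < p) (hp1 : p < 1)
    (M : ℕ → ℝ) (hM : ∀ k, 0 < M k) {ι : Type*} [Fintype ι] (c A B : ι → ℝ) (f : ℝ → ℝ)
    (hf : f = fun x => ∑ k, c k * Set.indicator (Set.Icc (A k) (B k)) (fun _ => (1 : ℝ)) x) :
    ∃ F : ℕ → ℝ → ℝ,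
      (∀ i, ContDiff ℝ (⊤ : ℕ∞) (F i) ∧ (∀ n, MemLp' p (iteratedDeriv n (F i))) ∧
        BddAbove (Set.range fun k : ℕ => pNorm p (iteratedDeriv k (F i)) / M k)) ∧
      Filter.Tendsto (fun i => pNorm p (fun x => f x - F i x)) Filter.atTop (nhds 0) ∧
      Filter.Tendsto (fun i => ⨆ n : ℕ, pNorm p (iteratedDeriv (n + 1) (F i)) / M (n + 1))
        Filter.atTop (nhds 0) ∧
      (∀ ε > 0, ∃ N, ∀ i ≥ N, ∀ j ≥ N, MNorm p M (fun x => F i x - F j x) < ε) ∧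
      Filter.Tendsto (fun i => MNorm p M (F i)) Filter.atTop (nhds (pNorm p f / M 0)) := by
  replace hf : f = ∑ k, c k • (Icc (A k) (B k)).indicator 1 := by
    rw [hf]
    ext x
    simp [indicator_apply]
  have hf_flat : FlatlyApproximable p f :=
    hf ▸ flatlyApproximable_sum_indicator_Icc hp hp1 Finset.univ c A B
  have hf_lt : lpPow p volume f < ∞ := hf ▸ lpPow_sum_indicator_Icc_lt_top hp Finset.univ c A B
  have hf_meas := hf_flat.aestronglyMeasurable
  obtain ⟨t, F, hF⟩ := hf_flat.exists_isFlatApproxSeq hM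
  refine ⟨F, fun i => ?_, hF.tendsto_pNorm_sub hp hf_meas,
    hF.tendsto_iSup_pNorm_iteratedDeriv_succ_div hp hM,
    fun _ => hF.exists_forall_MNorm_sub_lt hp hp1.le hM hf_meas,
    hF.tendsto_MNorm hp hp1.le hM hf_meas hf_lt⟩
  have h_approx := hF.isFlatApprox i
  exact ⟨h_approx.contDiff,
    h_approx.memLp'_iteratedDeriv hp.le hp1.le (weightTolerance_ne_top hp.le (hF.ne_top i))
      hf_meas hf_lt,
    h_approx.bddAbove_range_pNorm_iteratedDeriv_div hp hM (hF.ne_top i)⟩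

/-- Lemma: approximation of step functions. Any finite linear combination of
indicators of pairwise disjoint bounded intervals is the `L^p`-limit of a `‖·‖_M`-Cauchy
sequence of smooth functions whose weighted derivative norms tend to `0`, and whose
`‖·‖_M`-norms tend to `‖f‖_p / M_0`. -/
theorem step_function_approx (p : ℝ) (hp : 0 < p) (hp1 : p < 1)
    (M : ℕ → ℝ) (hM : ∀ k, 1 ≤ M k)
    (m : ℕ) (c : Fin m → ℝ) (A B : Fin m → ℝ) (hAB : ∀ k, A k < B k)
    (hdisj : ∀ k l, k ≠ l → Disjoint (Set.Icc (A k) (B k)) (Set.Icc (A l) (B l)))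
    (f : ℝ → ℝ)
    (hf : f = fun x => ∑ k, c k * Set.indicator (Set.Icc (A k) (B k)) (fun _ => (1 : ℝ)) x) :
    ∃ F : ℕ → ℝ → ℝ,
      (∀ i, ContDiff ℝ (⊤ : ℕ∞) (F i) ∧ (∀ n, MemLp' p (iteratedDeriv n (F i))) ∧
        BddAbove (Set.range fun k : ℕ => pNorm p (iteratedDeriv k (F i)) / M k)) ∧
      Filter.Tendsto (fun i => pNorm p (fun x => f x - F i x)) Filter.atTop (nhds 0) ∧
      Filter.Tendsto (fun i => ⨆ n : ℕ, pNorm p (iteratedDeriv (n + 1) (F i)) / M (n + 1))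
        Filter.atTop (nhds 0) ∧
      (∀ ε > 0, ∃ N, ∀ i ≥ N, ∀ j ≥ N, MNorm p M (fun x => F i x - F j x) < ε) ∧
      Filter.Tendsto (fun i => MNorm p M (F i)) Filter.atTop (nhds (pNorm p f / M 0)) :=
  step_function_approx_general p hp hp1 M (fun k => zero_lt_one.trans_le (hM k)) c A B f hf
end
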